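/- Let d ≥ 2 be an integer and let ℓ, k ≥ 0 be integers. Then for every r ∈ [0,1], |R_{ℓ,k}(r)| ≤ |C_{ℓ,k}|, where |C_{ℓ,k}| = √(2ℓ+4k+d) · (1/k!) · ∏_{j=1}^{k} (ℓ+k−j+d/2) is the absolute value of the normalizing constant of R_{ℓ,k}. -/

import Mathlib

/-!
Put `β = ℓ + d/2 - 1 ≥ 0`. Then `R_{ℓ,k}(r) = √(2ℓ+4k+d) · r^ℓ · p(r²)`, where `p` is the Jacobi
polynomial `P_k^{(0,β)}(2x - 1)`, and `|C_{ℓ,k}| = √(2ℓ+4k+d) · |p(0)|`. So it suffices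
that `|p| ≤ |p(0)|` on `[0,1]`, which is shown by Sonine's method.

The polynomial `p` solves `x(1-x)p'' + (β+1-(β+2)x)p' + λp = 0` with `λ = k(k+β+1)`. Hence
`F = λp² + x(1-x)p'²` satisfies `F' = ((2β+2)x - (2β+1))p'²`, so `F` decreases and then increases on
`[0,1]`, which gives `λp² ≤ F ≤ max (F 0) (F 1) = λ · max (p(0)²) (p(1)²)`. Finally `p(1) = 1`,
because `p(1)` is the `k`-th finite difference of a polynomial of degree `k`, and
`|p(0)| = (β+k choose k) ≥ 1`.
-/

open Finset

/-- The radial Zernike polynomial `R_{ℓ,k}` in dimension `d`. -/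
noncomputable def zernikeR (d ℓ k : ℕ) (r : ℝ) : ℝ :=
  Real.sqrt (2 * ℓ + 4 * k + d) *
    ∑ s ∈ Finset.range (k + 1),
      (-1 : ℝ) ^ s * (k.choose s : ℝ) * ((k.factorial : ℝ))⁻¹ *
        (∏ j ∈ Finset.Icc 1 k, ((ℓ : ℝ) + 2 * k - s - j + d / 2)) *
        r ^ (ℓ + 2 * (k - s))

section Sonine

lemma le_max_of_deriv_nonpos_of_deriv_nonneg {f : ℝ → ℝ} {a b c x : ℝ}
    (hcont : ContinuousOn f (Set.Icc a b)) (hdiff : DifferentiableOn ℝ f (Set.Ioo a b))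
    (hneg : ∀ t ∈ Set.Ioo a b, t < c → deriv f t ≤ 0)
    (hpos : ∀ t ∈ Set.Ioo a b, c < t → 0 ≤ deriv f t) (hx : x ∈ Set.Icc a b) :
    f x ≤ max (f a) (f b) := by
  obtain ⟨hax, hxb⟩ := hx
  rcases le_total x c with hxc | hcx
  · have hsub : Set.Ioo a x ⊆ Set.Ioo a b := Set.Ioo_subset_Ioo_right hxb
    have hanti : AntitoneOn f (Set.Icc a x) := by
      refine antitoneOn_of_deriv_nonpos (convex_Icc a x)
        (hcont.mono (Set.Icc_subset_Icc_right hxb)) ?_ ?_ <;> rw [interior_Icc]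
      · exact hdiff.mono hsub
      · exact fun t ht => hneg t (hsub ht) (ht.2.trans_le hxc)
    exact le_max_of_le_left (hanti (Set.left_mem_Icc.2 hax) (Set.right_mem_Icc.2 hax) hax)
  · have hsub : Set.Ioo x b ⊆ Set.Ioo a b := Set.Ioo_subset_Ioo_left hax
    have hmono : MonotoneOn f (Set.Icc x b) := by
      refine monotoneOn_of_deriv_nonneg (convex_Icc x b)
        (hcont.mono (Set.Icc_subset_Icc_left hax)) ?_ ?_ <;> rw [interior_Icc]
      · exact hdiff.mono hsub
      · exact fun t ht => hpos t (hsub ht) (hcx.trans_lt ht.1)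
    exact le_max_of_le_right (hmono (Set.left_mem_Icc.2 hxb) (Set.right_mem_Icc.2 hxb) hxb)

/-- Sonine's function of a solution `y` of `φ y'' + ψ y' + lam y = 0`; the derivative of `y` is the
separate argument `y'`. It is at least `lam y²` wherever `φ ≥ 0`, and equals it where `φ = 0`. -/
def sonine {𝕜 : Type*} [Semiring 𝕜] (lam : 𝕜) (φ y y' : 𝕜 → 𝕜) (x : 𝕜) : 𝕜 :=
  lam * y x ^ 2 + φ x * y' x ^ 2

lemma sonine_of_eq_zero {𝕜 : Type*} [Semiring 𝕜] (lam : 𝕜) {φ : 𝕜 → 𝕜} (y y' : 𝕜 → 𝕜) {x : 𝕜}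
    (hφ : φ x = 0) : sonine lam φ y y' x = lam * y x ^ 2 := by
  simp [sonine, hφ]

lemma hasDerivAt_sonine {𝕜 : Type*} [NontriviallyNormedField 𝕜] {φ y y' : 𝕜 → 𝕜}
    {lam φ' ψ y'' x : 𝕜} (hφ : HasDerivAt φ φ' x) (hy : HasDerivAt y (y' x) x)
    (hy' : HasDerivAt y' y'' x) (ode : φ x * y'' + ψ * y' x + lam * y x = 0) :
    HasDerivAt (sonine lam φ y y') ((φ' - 2 * ψ) * y' x ^ 2) x := by
  refine (((hy.pow 2).const_mul lam).add (hφ.mul (hy'.pow 2))).congr_deriv ?_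
  simp only [Nat.cast_ofNat, Nat.add_one_sub_one, pow_one, Pi.pow_apply]
  linear_combination (2 * y' x) * ode

theorem abs_le_max_of_sonine {φ φ' ψ y y' y'' : ℝ → ℝ} {lam a b c x : ℝ} (hlam : 0 < lam)
    (hφ : ∀ t ∈ Set.Icc a b, HasDerivAt φ (φ' t) t)
    (hy : ∀ t ∈ Set.Icc a b, HasDerivAt y (y' t) t)
    (hy' : ∀ t ∈ Set.Icc a b, HasDerivAt y' (y'' t) t)
    (ode : ∀ t ∈ Set.Icc a b, φ t * y'' t + ψ t * y' t + lam * y t = 0)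
    (hφa : φ a = 0) (hφb : φ b = 0) (hφx : 0 ≤ φ x)
    (hneg : ∀ t ∈ Set.Ioo a b, t < c → φ' t - 2 * ψ t ≤ 0)
    (hpos : ∀ t ∈ Set.Ioo a b, c < t → 0 ≤ φ' t - 2 * ψ t) (hx : x ∈ Set.Icc a b) :
    |y x| ≤ max |y a| |y b| := by
  have hder : ∀ t ∈ Set.Icc a b,
      HasDerivAt (sonine lam φ y y') ((φ' t - 2 * ψ t) * y' t ^ 2) t := fun t ht =>
    hasDerivAt_sonine (hφ t ht) (hy t ht) (hy' t ht) (ode t ht)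
  have hder' : ∀ t ∈ Set.Ioo a b,
      deriv (sonine lam φ y y') t = (φ' t - 2 * ψ t) * y' t ^ 2 := fun t ht =>
    (hder t (Set.Ioo_subset_Icc_self ht)).deriv
  have hsonine : sonine lam φ y y' x ≤ max (sonine lam φ y y' a) (sonine lam φ y y' b) := by
    refine le_max_of_deriv_nonpos_of_deriv_nonneg (c := c)
      (fun t ht => (hder t ht).continuousAt.continuousWithinAt)
      (fun t ht =>
        (hder t (Set.Ioo_subset_Icc_self ht)).differentiableAt.differentiableWithinAt)
      (fun t ht htc => ?_) (fun t ht hct => ?_) hx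
    · rw [hder' t ht]
      exact mul_nonpos_of_nonpos_of_nonneg (hneg t ht htc) (sq_nonneg _)
    · rw [hder' t ht]
      exact mul_nonneg (hpos t ht hct) (sq_nonneg _)
  have hsq : lam * y x ^ 2 ≤ max (lam * y a ^ 2) (lam * y b ^ 2) :=
    calc lam * y x ^ 2 ≤ sonine lam φ y y' x :=
          le_add_of_nonneg_right (mul_nonneg hφx (sq_nonneg _))
      _ ≤ max (lam * y a ^ 2) (lam * y b ^ 2) := by
          rwa [sonine_of_eq_zero lam y y' hφa, sonine_of_eq_zero lam y y' hφb] at hsonine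
  simpa only [le_max_iff, mul_le_mul_iff_right₀ hlam, sq_le_sq] using hsq

end Sonine

section FallingFactorial

open Polynomial

variable {R : Type*} [CommRing R]

lemma prod_Icc_eq_descPochhammer_eval (k : ℕ) (t : R) :
    ∏ j ∈ Icc 1 k, (t + 1 - j) = (descPochhammer R k).eval t := by
  rw [descPochhammer_eval_eq_prod_range, ← Ico_add_one_right_eq_Icc,
    prod_Ico_eq_prod_range]
  refine prod_congr rfl fun j _ => ?_
  push_cast
  ring

lemma descPochhammer_eval_add_one_mul (k : ℕ) (t : R) :
    (descPochhammer R k).eval (t + 1) * (t + 1 - k) = (t + 1) * (descPochhammer R k).eval t := by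
  rw [← descPochhammer_succ_eval, descPochhammer_succ_left]
  simp

lemma fwdDiff_iter_descPochhammer_eval [IsDomain R] (k : ℕ) (t : R) :
    (fwdDiff 1)^[k] (descPochhammer R k).eval t = k.factorial := by
  have h := congrFun (descPochhammer R k).fwdDiff_iter_degree_eq_factorial t
  rw [descPochhammer_natDegree, (monic_descPochhammer R k).leadingCoeff] at h
  simpa using h

lemma factorial_le_descPochhammer_eval {S : Type*} [CommRing S] [LinearOrder S]
    [IsStrictOrderedRing S] {k : ℕ} {t : S} (ht : (k : S) ≤ t) :
    (k.factorial : S) ≤ (descPochhammer S k).eval t := by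
  rw [← Nat.descFactorial_self, ← descPochhammer_eval_eq_descFactorial]
  have hk : (k : S) - 1 ≤ k := sub_le_self _ zero_le_one
  exact monotoneOn_descPochhammer_eval k hk (hk.trans ht) ht

end FallingFactorial

section Jacobi

open Polynomial

variable {R : Type*} [CommRing R]

/-- The shifted Jacobi polynomial `k! · P_k^{(0,β)}(2X - 1)`. The factor `k!` keeps division out of
the coefficients, so that `R` can be any commutative ring. -/
noncomputable def shiftedJacobi (β : R) (k : ℕ) : R[X] :=
  ∑ m ∈ range (k + 1),
    C ((-1) ^ (k + m) * (k.choose m : R) * (descPochhammer R k).eval (β + k + m)) * X ^ m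

lemma coeff_shiftedJacobi (β : R) (k m : ℕ) :
    (shiftedJacobi β k).coeff m =
      (-1) ^ (k + m) * (k.choose m : R) * (descPochhammer R k).eval (β + k + m) := by
  simp only [shiftedJacobi, finsetSum_coeff, coeff_C_mul, coeff_X_pow, mul_ite, mul_one, mul_zero,
    sum_ite_eq, mem_range, ite_eq_left_iff, not_lt]
  intro hkm
  simp [Nat.choose_eq_zero_of_lt hkm]

lemma shiftedJacobi_eval (β : R) (k : ℕ) (x : R) :
    (shiftedJacobi β k).eval x = ∑ m ∈ range (k + 1),
      (-1) ^ (k + m) * (k.choose m : R) * (descPochhammer R k).eval (β + k + m) * x ^ m := by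
  simp [shiftedJacobi, eval_finsetSum]

lemma coeff_shiftedJacobi_succ (β : R) (k m : ℕ) :
    ((m : R) + 1) * (m + β + 1) * (shiftedJacobi β k).coeff (m + 1) =
      (m - k) * (m + k + β + 1) * (shiftedJacobi β k).coeff m := by
  have hpoch := descPochhammer_eval_add_one_mul k (β + k + m)
  have hchoose : ((k : R) + 1) * k.choose m = (k.choose m + k.choose (m + 1)) * (m + 1) := by
    simpa [Nat.choose_succ_succ'] using congrArg (Nat.cast (R := R)) (Nat.add_one_mul_choose_eq k m)
  rw [coeff_shiftedJacobi, coeff_shiftedJacobi, ← add_assoc k m 1, pow_succ, Nat.cast_succ,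
    ← add_assoc (β + k)]
  linear_combination (-(-1) ^ (k + m) * ((m : R) + 1) * (k.choose (m + 1) : R)) * hpoch
    + (-1) ^ (k + m) * (β + k + m + 1) * (descPochhammer R k).eval (β + k + m) * hchoose

theorem shiftedJacobi_ode (β : R) (k : ℕ) :
    X * (1 - X) * derivative (derivative (shiftedJacobi β k))
      + (C (β + 1) - C (β + 2) * X) * derivative (shiftedJacobi β k)
      + C (k * (k + β + 1)) * shiftedJacobi β k = 0 := by
  set p := shiftedJacobi β k with hp
  suffices h : X * derivative (derivative p) - X * (X * derivative (derivative p))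
      + C (β + 1) * derivative p - C (β + 2) * (X * derivative p)
      + C (k * (k + β + 1)) * p = 0 by
    linear_combination h
  ext m
  have hrec := coeff_shiftedJacobi_succ β k m
  rw [← hp] at hrec
  rcases m with _ | _ | m <;>
  · simp only [coeff_add, coeff_sub, coeff_C_mul, coeff_X_mul, coeff_X_mul_zero, coeff_derivative,
      coeff_zero]
    push_cast at hrec ⊢
    linear_combination hrec

lemma shiftedJacobi_eval_zero (β : R) (k : ℕ) :
    (shiftedJacobi β k).eval 0 = (-1) ^ k * (descPochhammer R k).eval (β + k) := by
  simp [← coeff_zero_eq_eval_zero, coeff_shiftedJacobi]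

lemma shiftedJacobi_eval_one [IsDomain R] (β : R) (k : ℕ) :
    (shiftedJacobi β k).eval 1 = k.factorial := by
  rw [shiftedJacobi_eval, ← fwdDiff_iter_descPochhammer_eval k (β + k), fwdDiff_iter_eq_sum_shift]
  refine sum_congr rfl fun m hm => ?_
  have hsign : (-1 : R) ^ (k + m) = (-1) ^ (k - m) := by
    obtain ⟨n, rfl⟩ := Nat.exists_eq_add_of_le (mem_range_succ_iff.1 hm)
    rw [Nat.add_sub_cancel_left, add_right_comm, pow_add, Even.neg_one_pow ⟨m, rfl⟩, one_mul]
  simp [hsign]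

theorem abs_shiftedJacobi_eval_le {β x : ℝ} (hβ : 0 ≤ β) (k : ℕ) (hx : x ∈ Set.Icc (0 : ℝ) 1) :
    |(shiftedJacobi β k).eval x| ≤ (descPochhammer ℝ k).eval (β + k) := by
  have hfactorial : (k.factorial : ℝ) ≤ (descPochhammer ℝ k).eval (β + k) :=
    factorial_le_descPochhammer_eval (le_add_of_nonneg_left hβ)
  rcases k.eq_zero_or_pos with rfl | hk
  · simp [shiftedJacobi_eval]
  set p := shiftedJacobi β k with hp
  have hode (t : ℝ) : t * (1 - t) * (derivative (derivative p)).eval t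
      + (β + 1 - (β + 2) * t) * (derivative p).eval t + k * (k + β + 1) * p.eval t = 0 := by
    simpa using congrArg (eval t) (shiftedJacobi_ode β k)
  have hφ (t : ℝ) : HasDerivAt (fun t => t * (1 - t)) (1 - 2 * t) t :=
    ((hasDerivAt_id t).mul ((hasDerivAt_id t).const_sub 1)).congr_deriv (by simp only [id_eq]; ring)
  have hmax : |p.eval x| ≤ max |p.eval 0| |p.eval 1| := by
    -- `φ' - 2ψ = (2β+2)t - (2β+1)` changes sign at this `c`.
    refine abs_le_max_of_sonine (c := (2 * β + 1) / (2 * β + 2)) (by positivity)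
      (fun t _ => hφ t) (fun t _ => p.hasDerivAt t) (fun t _ => (derivative p).hasDerivAt t)
      (fun t _ => hode t) (by simp) (by simp) (mul_nonneg hx.1 (sub_nonneg.2 hx.2))
      (fun t _ htc => ?_) (fun t _ hct => ?_) hx
    · rw [lt_div_iff₀ (by positivity)] at htc
      linarith
    · rw [div_lt_iff₀ (by positivity)] at hct
      linarith
  have hzero : |p.eval 0| = (descPochhammer ℝ k).eval (β + k) := by
    rw [hp, shiftedJacobi_eval_zero, abs_mul, abs_neg_one_pow, one_mul,
      abs_of_nonneg (k.factorial.cast_nonneg.trans hfactorial)]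
  have hone : |p.eval 1| = k.factorial := by rw [hp, shiftedJacobi_eval_one, Nat.abs_cast]
  rwa [hzero, hone, max_eq_left hfactorial] at hmax

end Jacobi

lemma zernikeR_eq_shiftedJacobi_eval (d ℓ k : ℕ) (r : ℝ) :
    zernikeR d ℓ k r = Real.sqrt (2 * ℓ + 4 * k + d) * (k.factorial : ℝ)⁻¹ *
      (r ^ ℓ * (shiftedJacobi ((ℓ : ℝ) + d / 2 - 1) k).eval (r ^ 2)) := by
  rw [zernikeR, shiftedJacobi_eval, ← sum_range_reflect, mul_assoc]
  congr 1
  rw [mul_sum, mul_sum]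
  refine sum_congr rfl fun m hm => ?_
  obtain ⟨n, rfl⟩ := Nat.exists_eq_add_of_le (mem_range_succ_iff.1 hm)
  have hn : m + n + 1 - 1 - m = n := by omega
  have hsign : (-1 : ℝ) ^ (m + n + m) = (-1) ^ n := by
    rw [add_right_comm, pow_add, Even.neg_one_pow ⟨m, rfl⟩, one_mul]
  have hprod : ∏ j ∈ Icc 1 (m + n), ((ℓ : ℝ) + 2 * (m + n : ℕ) - n - j + d / 2) =
      (descPochhammer ℝ (m + n)).eval ((ℓ : ℝ) + d / 2 - 1 + (m + n : ℕ) + m) := by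
    rw [← prod_Icc_eq_descPochhammer_eval]
    refine prod_congr rfl fun j _ => ?_
    push_cast
    ring
  rw [hn, hprod, hsign, Nat.choose_symm_add, Nat.add_sub_cancel, pow_add, pow_mul]
  ring

theorem zernikeR_uniform_bound_general (d ℓ k : ℕ) (h : 2 ≤ 2 * ℓ + d) {r : ℝ} (hr : |r| ≤ 1) :
    |zernikeR d ℓ k r| ≤
      Real.sqrt (2 * ℓ + 4 * k + d) * (k.factorial : ℝ)⁻¹ *
        (∏ j ∈ Icc 1 k, ((ℓ : ℝ) + k - j + d / 2)) * |r| ^ ℓ := by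
  have hβ : 0 ≤ (ℓ : ℝ) + d / 2 - 1 := by
    have h' : (2 : ℝ) ≤ 2 * ℓ + d := by exact_mod_cast h
    linarith
  have hprod : ∏ j ∈ Icc 1 k, ((ℓ : ℝ) + k - j + d / 2) =
      (descPochhammer ℝ k).eval ((ℓ : ℝ) + d / 2 - 1 + k) := by
    rw [← prod_Icc_eq_descPochhammer_eval]
    exact prod_congr rfl fun j _ => by ring
  have hjacobi := abs_shiftedJacobi_eval_le hβ k ⟨sq_nonneg r, (sq_le_one_iff_abs_le_one r).2 hr⟩
  rw [hprod, zernikeR_eq_shiftedJacobi_eval, abs_mul, abs_mul (r ^ ℓ), abs_pow,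
    abs_of_nonneg (by positivity), mul_comm (|r| ^ ℓ), ← mul_assoc]
  gcongr

lemma zernikeR_bound_nonneg (d ℓ k : ℕ) :
    0 ≤ Real.sqrt (2 * ℓ + 4 * k + d) * (k.factorial : ℝ)⁻¹ *
      ∏ j ∈ Icc 1 k, ((ℓ : ℝ) + k - j + d / 2) := by
  refine mul_nonneg (by positivity) (prod_nonneg fun j hj => ?_)
  have hjk : (j : ℝ) ≤ k := Nat.cast_le.2 (mem_Icc.1 hj).2
  linarith [show (0 : ℝ) ≤ ℓ + d / 2 by positivity]

/-- On `[0,1]` the radial Zernike polynomial is bounded by the absolute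
value of its normalizing constant:
`|R_{ℓ,k}(r)| ≤ |C_{ℓ,k}| = √(2ℓ+4k+d) · (1/k!) · ∏_{j=1}^k (ℓ+k-j+d/2)`. -/
theorem zernikeR_uniform_bound (d ℓ k : ℕ) (hd : 2 ≤ d) :
    ∀ r ∈ Set.Icc (0:ℝ) 1,
      |zernikeR d ℓ k r| ≤
        Real.sqrt (2 * ℓ + 4 * k + d) * ((k.factorial : ℝ))⁻¹ *
          ∏ j ∈ Finset.Icc 1 k, ((ℓ : ℝ) + k - j + d / 2) := by
  intro r hr
  have hr' : |r| ≤ 1 := by rw [abs_of_nonneg hr.1]; exact hr.2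
  exact (zernikeR_uniform_bound_general d ℓ k (by omega) hr').trans
    (mul_le_of_le_one_right (zernikeR_bound_nonneg d ℓ k) (pow_le_one₀ (abs_nonneg r) hr'))
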